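/- Suppose γ_j = (α_j, β_j): [a,b] → I×X are causal curves converging uniformly to an absolutely continuous curve γ = (α,β). If α' > 0 a.e. (or α' < 0 a.e.), then γ is a causal curve, i.e., v_β(α_t,t)² ≤ h(γ_t)² α'(t)² a.e. -/

import Mathlib

open Filter MeasureTheory Set Topology
open scoped ENNReal NNReal

noncomputable section

/-- The metric speed of a curve `β` at time `t` w.r.t. a distance function `dist`. -/
def mSpeed {X : Type*} (dst : X → X → ℝ) (β : ℝ → X) (t : ℝ) : ℝ :=
  Filter.limsup (fun e : ℝ => dst (β (t + e)) (β t) / |e|) (nhdsWithin (0 : ℝ) {0}ᶜ)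

/-- The generalized metric speed `v_β(s,t)` of a curve `β` w.r.t. the family of
metrics `d`. -/
def genSpeed {X : Type*} (d : ℝ → X → X → ℝ) (β : ℝ → X) (s t : ℝ) : ℝ :=
  Filter.limsup (fun e : ℝ => (∫ u in t..(t + e), mSpeed (d s) β u) / e)
    (nhdsWithin (0 : ℝ) {0}ᶜ)

/-- Absolute continuity of a curve on `[a,b]` w.r.t. a distance function. -/
def ACOn {X : Type*} (dst : X → X → ℝ) (β : ℝ → X) (a b : ℝ) : Prop :=
  ∃ g : ℝ → ℝ, MeasureTheory.IntegrableOn g (Set.Icc a b) ∧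
    ∀ ⦃t u : ℝ⦄, t ∈ Set.Icc a b → u ∈ Set.Icc a b → t ≤ u →
      dst (β t) (β u) ≤ ∫ r in t..u, g r

/-- The standard distance on `ℝ`. -/
def rdist : ℝ → ℝ → ℝ := fun x y => |x - y|

/-- `d` is a family of metrics on `X` indexed by `s ∈ I`, each generating the
topology of `X`. -/
def IsMetricFamily {X : Type*} [TopologicalSpace X] (I : Set ℝ) (d : ℝ → X → X → ℝ) : Prop :=
  ∀ s ∈ I,
    (∀ x : X, d s x x = 0) ∧ (∀ x y : X, x ≠ y → 0 < d s x y) ∧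
    (∀ x y : X, d s x y = d s y x) ∧ (∀ x y z : X, d s x z ≤ d s x y + d s y z) ∧
    (∀ x : X, (nhds x).HasBasis (fun ε : ℝ => 0 < ε) (fun ε => {y | d s x y < ε}))

/-- Condition (C): local uniform continuity of `s ↦ d_s` in a logarithmic sense. -/
def CondC {X : Type*} [TopologicalSpace X] (I : Set ℝ) (d : ℝ → X → X → ℝ) : Prop :=
  ∀ J : Set ℝ, ∀ K : Set X, J ⊆ I → IsCompact J → IsCompact K →
    ∃ r > (0 : ℝ), ∃ ω : ℝ → ℝ, ω 0 = 0 ∧ Monotone ω ∧ ContinuousAt ω 0 ∧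
      ∀ s ∈ J, ∀ s' ∈ J, ∀ x ∈ K, ∀ y ∈ K, x ≠ y →
        sInf ((fun u => d u x y) '' J) < r →
        |Real.log (d s x y / d s' x y)| ≤ ω |s - s'|

/-- Condition (L): local log-Lipschitz dependence of `d_s` on `s`. -/
def CondL {X : Type*} [TopologicalSpace X] (I : Set ℝ) (d : ℝ → X → X → ℝ) : Prop :=
  ∀ J : Set ℝ, ∀ K : Set X, J ⊆ I → IsCompact J → IsCompact K →
    ∃ C > (0 : ℝ), ∃ r > (0 : ℝ),
      ∀ s ∈ J, ∀ s' ∈ J, ∀ x ∈ K, ∀ y ∈ K, x ≠ y →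
        sInf ((fun u => d u x y) '' J) < r →
        |Real.log (d s x y / d s' x y)| ≤ C * |s - s'|

/-- Condition (H): Lipschitz continuity of `h` in the time variable, locally
uniformly. -/
def CondH {X : Type*} [TopologicalSpace X] (I : Set ℝ) (h : ℝ → X → ℝ) : Prop :=
  ∀ J : Set ℝ, ∀ K : Set X, J ⊆ I → IsCompact J → IsCompact K →
    ∃ C' > (0 : ℝ), ∀ s ∈ J, ∀ s' ∈ J, ∀ x ∈ K, |h s x - h s' x| ≤ C' * |s - s'|

/-- A curve `(α, β) : [a,b] → I × X` with both components absolutely continuous. -/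
def CurveIn {X : Type*} (I : Set ℝ) (d : ℝ → X → X → ℝ) (α : ℝ → ℝ) (β : ℝ → X)
    (a b : ℝ) : Prop :=
  a < b ∧ ACOn rdist α a b ∧ (∀ s ∈ I, ACOn (d s) β a b) ∧ ∀ t ∈ Set.Icc a b, α t ∈ I

/-- Future directed: `α' > 0` a.e. -/
def FutureDirected (α : ℝ → ℝ) (a b : ℝ) : Prop :=
  ∀ᵐ t : ℝ, t ∈ Set.Ioo a b → 0 < deriv α t

/-- Past directed: `α' < 0` a.e. -/
def PastDirected (α : ℝ → ℝ) (a b : ℝ) : Prop :=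
  ∀ᵐ t : ℝ, t ∈ Set.Ioo a b → deriv α t < 0

/-- The causality inequality `v_β(α_t,t)² ≤ h(γ_t)² α'(t)²` a.e. -/
def CausalIneq {X : Type*} (d : ℝ → X → X → ℝ) (h : ℝ → X → ℝ) (α : ℝ → ℝ)
    (β : ℝ → X) (a b : ℝ) : Prop :=
  ∀ᵐ t : ℝ, t ∈ Set.Ioo a b →
    (genSpeed d β (α t) t) ^ 2 ≤ (h (α t) (β t)) ^ 2 * (deriv α t) ^ 2

/-- The timelike inequality `v_β(α_t,t)² < h(γ_t)² α'(t)²` a.e. -/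
def TimelikeIneq {X : Type*} (d : ℝ → X → X → ℝ) (h : ℝ → X → ℝ) (α : ℝ → ℝ)
    (β : ℝ → X) (a b : ℝ) : Prop :=
  ∀ᵐ t : ℝ, t ∈ Set.Ioo a b →
    (genSpeed d β (α t) t) ^ 2 < (h (α t) (β t)) ^ 2 * (deriv α t) ^ 2

/-- Future directed causal curve. -/
def FutureCausal {X : Type*} (I : Set ℝ) (d : ℝ → X → X → ℝ) (h : ℝ → X → ℝ)
    (α : ℝ → ℝ) (β : ℝ → X) (a b : ℝ) : Prop :=
  CurveIn I d α β a b ∧ FutureDirected α a b ∧ CausalIneq d h α β a b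

/-- Future directed timelike curve. -/
def FutureTimelike {X : Type*} (I : Set ℝ) (d : ℝ → X → X → ℝ) (h : ℝ → X → ℝ)
    (α : ℝ → ℝ) (β : ℝ → X) (a b : ℝ) : Prop :=
  CurveIn I d α β a b ∧ FutureDirected α a b ∧ TimelikeIneq d h α β a b

/-- Causal curve (future or past directed). -/
def CausalCurve {X : Type*} (I : Set ℝ) (d : ℝ → X → X → ℝ) (h : ℝ → X → ℝ)
    (α : ℝ → ℝ) (β : ℝ → X) (a b : ℝ) : Prop :=
  CurveIn I d α β a b ∧ (FutureDirected α a b ∨ PastDirected α a b) ∧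
    CausalIneq d h α β a b

/-- The causal relation `p ≤ q` in the generalized Lorentzian product. -/
def causalRel {X : Type*} (I : Set ℝ) (d : ℝ → X → X → ℝ) (h : ℝ → X → ℝ)
    (p q : ℝ × X) : Prop :=
  ∃ a b α β, FutureCausal I d h α β a b ∧
    α a = p.1 ∧ β a = p.2 ∧ α b = q.1 ∧ β b = q.2

/-- The chronological relation `p ≪ q` in the generalized Lorentzian product. -/
def chronRel {X : Type*} (I : Set ℝ) (d : ℝ → X → X → ℝ) (h : ℝ → X → ℝ)
    (p q : ℝ × X) : Prop :=
  ∃ a b α β, FutureTimelike I d h α β a b ∧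
    α a = p.1 ∧ β a = p.2 ∧ α b = q.1 ∧ β b = q.2

/-- The Lorentzian length of a curve. -/
def lorLen {X : Type*} (d : ℝ → X → X → ℝ) (h : ℝ → X → ℝ) (α : ℝ → ℝ) (β : ℝ → X)
    (a b : ℝ) : ℝ :=
  ∫ t in a..b,
    Real.sqrt ((h (α t) (β t)) ^ 2 * (deriv α t) ^ 2 - (genSpeed d β (α t) t) ^ 2)

/-- The time separation function `τ` of the generalized Lorentzian product. -/
def timeSep {X : Type*} (I : Set ℝ) (d : ℝ → X → X → ℝ) (h : ℝ → X → ℝ)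
    (p q : ℝ × X) : ℝ≥0∞ :=
  sSup {l | ∃ a b α β, FutureCausal I d h α β a b ∧
    α a = p.1 ∧ β a = p.2 ∧ α b = q.1 ∧ β b = q.2 ∧
    l = ENNReal.ofReal (lorLen d h α β a b)}

end

open Filter MeasureTheory Set Topology
open scoped ENNReal

/-- `D` is a metric on `ℝ × X` generating the product topology. -/
def IsCompatibleProdMetric {X : Type*} [TopologicalSpace X]
    (D : (ℝ × X) → (ℝ × X) → ℝ) : Prop :=
  (∀ p, D p p = 0) ∧ (∀ p q, p ≠ q → 0 < D p q) ∧ (∀ p q, D p q = D q p) ∧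
  (∀ p q r, D p r ≤ D p q + D q r) ∧
  (∀ p : ℝ × X, (nhds p).HasBasis (fun ε : ℝ => 0 < ε) (fun ε => {q | D p q < ε}))

theorem limsup_le_of_eventually_le_of_nonneg {F : Filter ℝ} [F.NeBot] {f : ℝ → ℝ} {c : ℝ}
    (hf : ∀ᶠ e in F, 0 ≤ f e) (h : ∀ᶠ e in F, f e ≤ c) : limsup f F ≤ c :=
  limsup_le_of_le (IsCoboundedUnder.of_frequently_ge hf.frequently) h

theorem limsup_le_const_mul_limsup {F : Filter ℝ} [F.NeBot] {f g : ℝ → ℝ} {c : ℝ} (hc : 0 < c)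
    (hf : ∀ᶠ e in F, 0 ≤ f e) (h : ∀ᶠ e in F, f e ≤ c * g e)
    (hg : ∃ B, ∀ᶠ e in F, g e ≤ B) : limsup f F ≤ c * limsup g F := by
  obtain ⟨B, hB⟩ := hg
  rw [← div_le_iff₀' hc]
  refine le_limsup_of_le ⟨B, by simpa using hB⟩ fun b hb => ?_
  rw [div_le_iff₀' hc]
  refine limsup_le_of_eventually_le_of_nonneg hf ?_
  filter_upwards [h, hb] with e h₁ h₂
  exact h₁.trans (by gcongr)

theorem limsup_nonneg_of_eventually_nonneg {F : Filter ℝ} [F.NeBot] {f : ℝ → ℝ}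
    (hf : ∀ᶠ e in F, 0 ≤ f e) : 0 ≤ limsup f F := by
  rw [limsup_eq]
  refine Real.sInf_nonneg fun c hc => ?_
  obtain ⟨e, h₁, h₂⟩ := (hf.and hc).exists
  exact h₁.trans h₂

/-- The limsup defining the metric speed may be taken over rational increments. -/
theorem limsup_punctured_eq_limsup_rat {f : ℝ → ℝ} (hf : ContinuousOn f {0}ᶜ) :
    limsup f (𝓝[≠] 0) = limsup (fun q : ℚ => f q) (comap ((↑) : ℚ → ℝ) (𝓝[≠] 0)) := by
  rw [limsup_eq, limsup_eq]
  congr 1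
  ext c
  simp only [mem_ofPred_eq]
  refine ⟨fun h => h.comap _, fun h => ?_⟩
  rw [eventually_comap] at h
  obtain ⟨U, hU, hUo, hU0, hUs⟩ : ∃ U : Set ℝ, U ∈ 𝓝[≠] (0 : ℝ) ∧ IsOpen U ∧ U ⊆ {0}ᶜ ∧
      ∀ e ∈ U, ∀ q : ℚ, (q : ℝ) = e → f q ≤ c := by
    rw [eventually_nhdsWithin_iff, eventually_nhds_iff] at h
    obtain ⟨V, hV, hVo, h0⟩ := h
    refine ⟨V ∩ {0}ᶜ, inter_mem (mem_nhdsWithin_of_mem_nhds (hVo.mem_nhds h0)) self_mem_nhdsWithin, hVo.inter isOpen_compl_singleton,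
      inter_subset_right, fun e he => hV e he.1 he.2⟩
  filter_upwards [hU] with e he
  by_contra! hlt
  have hmem : U ∩ f ⁻¹' Ioi c ∈ 𝓝 e :=
    inter_mem (hUo.mem_nhds he) ((hf.mono hU0 |>.continuousAt (hUo.mem_nhds he)).preimage_mem_nhds
      (Ioi_mem_nhds hlt))
  obtain ⟨x, hx, q, rfl⟩ := mem_closure_iff_nhds.1 (Rat.denseRange_cast (𝕜 := ℝ) e) _ hmem
  exact absurd (hUs _ hx.1 q rfl) (not_le.2 hx.2)

/-- Lebesgue differentiation, for the symmetric difference quotients used in `genSpeed`. -/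
theorem ae_tendsto_average {f : ℝ → ℝ} {p q : ℝ} (hf : IntegrableOn f (Ioo p q)) :
    ∀ᵐ t : ℝ, t ∈ Ioo p q →
      Tendsto (fun e : ℝ => (∫ u in t..(t + e), f u) / e) (𝓝[≠] 0) (𝓝 (f t)) := by
  rcases le_or_gt q p with hpq | hpq
  · simp [Ioo_eq_empty_of_le hpq]
  have hi : IntervalIntegrable f volume p q :=
    (intervalIntegrable_iff_integrableOn_Ioo_of_le hpq.le).2 hf
  filter_upwards [hi.ae_hasDerivAt_integral] with t ht htm
  have hd := ht (uIcc_of_le hpq.le ▸ Ioo_subset_Icc_self htm) t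
    (uIcc_of_le hpq.le ▸ Ioo_subset_Icc_self htm)
  rw [hasDerivAt_iff_tendsto_slope_zero] at hd
  refine hd.congr fun e => ?_
  simp [div_eq_inv_mul]

theorem average_mono {f g : ℝ → ℝ} {p q t e : ℝ} (hf : IntegrableOn f (Ioo p q))
    (hg : IntegrableOn g (Ioo p q)) (h : ∀ᵐ u : ℝ, u ∈ Ioo p q → f u ≤ g u)
    (ht : t ∈ Ioo p q) (hte : t + e ∈ Ioo p q) :
    (∫ u in t..(t + e), f u) / e ≤ (∫ u in t..(t + e), g u) / e := by
  have key : ∀ x ∈ Ioo p q, ∀ y ∈ Ioo p q, x ≤ y → ∫ u in x..y, f u ≤ ∫ u in x..y, g u := by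
    intro x hx y hy hxy
    have hs : Icc x y ⊆ Ioo p q := fun z hz => ⟨hx.1.trans_le hz.1, hz.2.trans_lt hy.2⟩
    have hi : ∀ {k : ℝ → ℝ}, IntegrableOn k (Ioo p q) → IntervalIntegrable k volume x y :=
      fun hk => (intervalIntegrable_iff_integrableOn_Icc_of_le hxy).2 (hk.mono_set hs)
    refine intervalIntegral.integral_mono_ae_restrict hxy (hi hf) (hi hg) ?_
    filter_upwards [ae_restrict_of_ae h, ae_restrict_mem measurableSet_Icc] with u hu hm
    exact hu (hs hm)
  rcases le_total 0 e with he | he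
  · exact div_le_div_of_nonneg_right (key _ ht _ hte (by linarith)) he
  · rw [intervalIntegral.integral_symm, intervalIntegral.integral_symm (f := g)]
    refine div_le_div_of_nonpos_of_le he (neg_le_neg (key _ hte _ ht (by linarith)))

theorem average_nonneg {f : ℝ → ℝ} (hf : ∀ u, 0 ≤ f u) (t e : ℝ) :
    0 ≤ (∫ u in t..(t + e), f u) / e := by
  rcases le_total 0 e with he | he
  · exact div_nonneg (intervalIntegral.integral_nonneg (by linarith) fun u _ => hf u) he
  · rw [intervalIntegral.integral_symm]
    exact div_nonneg_of_nonpos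
      (neg_nonpos.2 (intervalIntegral.integral_nonneg (by linarith) fun u _ => hf u)) he

theorem eventually_add_mem_Ioo {p q t : ℝ} (ht : t ∈ Ioo p q) :
    ∀ᶠ e in 𝓝[≠] (0 : ℝ), t + e ∈ Ioo p q := by
  have h : Tendsto (fun e : ℝ => t + e) (𝓝 0) (𝓝 t) :=
    (continuous_const.add continuous_id).tendsto' 0 t (by simp)
  exact (h.mono_left nhdsWithin_le_nhds).eventually (Ioo_mem_nhds ht.1 ht.2)

theorem AbsolutelyContinuousOnInterval.of_dist_le {Y Z : Type*} [PseudoMetricSpace Y]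
    [PseudoMetricSpace Z] {f : ℝ → Y} {G : ℝ → Z} {a b : ℝ}
    (hG : AbsolutelyContinuousOnInterval G a b)
    (h : ∀ t ∈ uIcc a b, ∀ u ∈ uIcc a b, dist (f t) (f u) ≤ dist (G t) (G u)) :
    AbsolutelyContinuousOnInterval f a b := by
  refine squeeze_zero' (Eventually.of_forall fun E => Finset.sum_nonneg fun _ _ => dist_nonneg)
    ?_ hG
  filter_upwards [mem_inf_of_right (mem_principal_self _)] with E hE
  exact Finset.sum_le_sum fun i hi => h _ (hE.1 i hi).1 _ (hE.1 i hi).2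

section MetricCurve

variable {Y : Type*} [PseudoMetricSpace Y] {β : ℝ → Y} {a b : ℝ}

theorem mSpeed_nonneg (β : ℝ → Y) (t : ℝ) : 0 ≤ mSpeed dist β t :=
  limsup_nonneg_of_eventually_nonneg (Eventually.of_forall fun _ => by positivity)

theorem ACOn.exists_dist_le (hβ : ACOn dist β a b) (hab : a ≤ b) :
    ∃ g : ℝ → ℝ, IntervalIntegrable g volume a b ∧ ∀ t ∈ Icc a b, ∀ u ∈ Icc a b,
      dist (β t) (β u) ≤ dist (∫ r in a..t, g r) (∫ r in a..u, g r) := by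
  obtain ⟨g, hg, h⟩ := hβ
  refine ⟨g, (intervalIntegrable_iff_integrableOn_Icc_of_le hab).2 hg, ?_⟩
  have hi : ∀ t ∈ Icc a b, IntervalIntegrable g volume a t := fun t ht =>
    (intervalIntegrable_iff_integrableOn_Icc_of_le ht.1).2
      (hg.mono_set (Icc_subset_Icc_right ht.2))
  have key : ∀ t ∈ Icc a b, ∀ u ∈ Icc a b, t ≤ u →
      dist (β t) (β u) ≤ dist (∫ r in a..t, g r) (∫ r in a..u, g r) := by
    intro t ht u hu htu
    refine (h ht hu htu).trans ?_
    rw [dist_comm, Real.dist_eq, intervalIntegral.integral_interval_sub_left (hi u hu) (hi t ht)]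
    exact le_abs_self _
  intro t ht u hu
  rcases le_total t u with htu | htu
  · exact key t ht u hu htu
  · rw [dist_comm, dist_comm (∫ r in a..t, g r)]
    exact key u hu t ht htu

theorem ACOn.absolutelyContinuousOnInterval (hβ : ACOn dist β a b) (hab : a ≤ b) :
    AbsolutelyContinuousOnInterval β a b := by
  obtain ⟨g, hg, h⟩ := hβ.exists_dist_le hab
  refine (hg.absolutelyContinuousOnInterval_intervalIntegral
    (c := a) left_mem_uIcc).of_dist_le ?_
  rwa [uIcc_of_le hab]

theorem ACOn.continuousOn (hβ : ACOn dist β a b) (hab : a ≤ b) : ContinuousOn β (Icc a b) := by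
  obtain ⟨g, hg, h⟩ := hβ.exists_dist_le hab
  have hG := (hg.absolutelyContinuousOnInterval_intervalIntegral
    (c := a) left_mem_uIcc).continuousOn
  rw [uIcc_of_le hab] at hG
  intro t ht
  rw [ContinuousWithinAt, tendsto_iff_dist_tendsto_zero]
  refine squeeze_zero' (Eventually.of_forall fun _ => dist_nonneg) ?_
    (tendsto_iff_dist_tendsto_zero.1 (hG t ht))
  filter_upwards [self_mem_nhdsWithin] with u hu using h u hu t ht

theorem ACOn.tendsto_dist (hβ : ACOn dist β a b) {t : ℝ} (ht : t ∈ Ioo a b) :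
    Tendsto (fun u => dist (β u) (β t)) (𝓝 t) (𝓝 0) :=
  tendsto_iff_dist_tendsto_zero.1 <|
    (hβ.continuousOn (ht.1.trans ht.2).le).continuousAt (Icc_mem_nhds ht.1 ht.2)

/-- At almost every time the difference quotients of an absolutely continuous curve are bounded,
and the metric speed is dominated by an integrable function. -/
theorem ACOn.exists_speed_bound (hβ : ACOn dist β a b) (hab : a ≤ b) :
    ∃ g : ℝ → ℝ, IntervalIntegrable g volume a b ∧ ∀ᵐ t : ℝ, t ∈ Ioo a b →
      (∃ B, ∀ᶠ e in 𝓝[≠] (0 : ℝ), dist (β (t + e)) (β t) / |e| ≤ B) ∧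
        mSpeed dist β t ≤ |g t| := by
  obtain ⟨g, hg, h⟩ := hβ.exists_dist_le hab
  refine ⟨g, hg, ?_⟩
  filter_upwards [hg.ae_hasDerivAt_integral] with t ht htm
  have hd := ht (uIcc_of_le hab ▸ Ioo_subset_Icc_self htm) a left_mem_uIcc
  rw [hasDerivAt_iff_tendsto_slope_zero] at hd
  have hd' := hd.abs
  have hle : ∀ᶠ e in 𝓝[≠] (0 : ℝ), dist (β (t + e)) (β t) / |e| ≤
      |e⁻¹ • ((∫ r in a..(t + e), g r) - ∫ r in a..t, g r)| := by
    filter_upwards [eventually_add_mem_Ioo htm] with e he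
    rw [smul_eq_mul, abs_mul, abs_inv, ← Real.dist_eq, div_eq_inv_mul]
    gcongr
    exact h _ (Ioo_subset_Icc_self he) _ (Ioo_subset_Icc_self htm)
  refine ⟨⟨|g t| + 1, ?_⟩, ?_⟩
  · filter_upwards [hle, hd'.eventually_le_const (lt_add_one _)] with e h₁ h₂ using h₁.trans h₂
  · rw [← hd'.limsup_eq]
    exact limsup_le_limsup hle
      (IsCoboundedUnder.of_frequently_ge
        (Eventually.of_forall fun e => (by positivity : (0 : ℝ) ≤ _)).frequently)
      hd'.isBoundedUnder_le

theorem measurable_mSpeed (hβ : Continuous β) : Measurable (mSpeed dist β) := by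
  have h : mSpeed dist β = fun t => limsup (fun q : ℚ => dist (β (t + q)) (β t) / |(q : ℝ)|)
      (comap ((↑) : ℚ → ℝ) (𝓝[≠] 0)) := by
    funext t
    refine limsup_punctured_eq_limsup_rat (f := fun e => dist (β (t + e)) (β t) / |e|) ?_
    refine ContinuousOn.div (by fun_prop) (by fun_prop) fun e he => ?_
    simpa using he
  rw [h]
  obtain ⟨s, hs⟩ := (comap ((↑) : ℚ → ℝ) (𝓝[≠] 0)).exists_antitone_basis
  refine Measurable.limsup' (fun q => ?_) ⟨hs.1, to_countable _⟩ fun _ => to_countable _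
  exact Continuous.measurable (by fun_prop)

theorem ACOn.integrableOn_mSpeed (hβ : ACOn dist β a b) (hab : a ≤ b) :
    IntegrableOn (mSpeed dist β) (Ioo a b) := by
  obtain ⟨g, hg, h⟩ := hβ.exists_speed_bound hab
  have hg' : IntegrableOn g (Ioo a b) := (intervalIntegrable_iff_integrableOn_Ioo_of_le hab).1 hg
  have hcont : Continuous fun t => β (max a (min t b)) := by
    exact (hβ.continuousOn hab).comp_continuous (f := fun t : ℝ => max a (min t b))
      (continuous_const.max (continuous_id.min continuous_const))
      fun t => ⟨le_max_left _ _, max_le hab (min_le_right _ _)⟩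
  have hclamp : ∀ t ∈ Ioo a b, max a (min t b) = t := fun t ht => by
    rw [min_eq_left ht.2.le, max_eq_right ht.1.le]
  refine Integrable.mono' hg'.abs ?_ ?_
  · refine (measurable_mSpeed hcont).aestronglyMeasurable.congr ?_
    filter_upwards [ae_restrict_mem measurableSet_Ioo] with t ht
    refine limsup_congr ?_
    filter_upwards [eventually_add_mem_Ioo ht] with e he
    rw [hclamp t ht, hclamp _ he]
  · filter_upwards [ae_restrict_of_ae h, ae_restrict_mem measurableSet_Ioo] with t ht htm
    rw [Real.norm_of_nonneg (mSpeed_nonneg β t)]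
    exact (ht htm).2

theorem ACOn.dist_le_integral_mSpeed (hβ : ACOn dist β a b) (hab : a ≤ b) :
    dist (β a) (β b) ≤ ∫ r in a..b, mSpeed dist β r := by
  have hac : AbsolutelyContinuousOnInterval (fun r => dist (β a) (β r)) a b :=
    (hβ.absolutelyContinuousOnInterval hab).of_dist_le fun t _ u _ => by
      rw [dist_comm (β a), dist_comm (β a)]
      exact abs_dist_sub_le _ _ _
  obtain ⟨g, -, h⟩ := hβ.exists_speed_bound hab
  calc dist (β a) (β b) = ∫ r in a..b, deriv (fun r => dist (β a) (β r)) r := by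
        rw [hac.integral_deriv_eq_sub]; simp
    _ ≤ ∫ r in a..b, mSpeed dist β r := by
        have hi := hac.intervalIntegrable_deriv
        rw [intervalIntegral.integral_of_le hab, intervalIntegral.integral_of_le hab,
          integral_Ioc_eq_integral_Ioo, integral_Ioc_eq_integral_Ioo]
        refine integral_mono_ae ((intervalIntegrable_iff_integrableOn_Ioo_of_le hab).1 hi)
          (hβ.integrableOn_mSpeed hab) ?_
        filter_upwards [ae_restrict_of_ae h, ae_restrict_of_ae hac.ae_differentiableAt,
          ae_restrict_mem measurableSet_Ioo] with t ht hdiff htm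
        obtain ⟨⟨B, hB⟩, -⟩ := ht htm
        have hd := (hdiff (uIcc_of_le hab ▸ Ioo_subset_Icc_self htm)).hasDerivAt
        rw [hasDerivAt_iff_tendsto_slope_zero] at hd
        refine (le_abs_self _).trans ?_
        rw [← hd.abs.limsup_eq]
        refine limsup_le_limsup (Eventually.of_forall fun e => ?_)
          hd.abs.isCoboundedUnder_le ⟨B, by simpa using hB⟩
        simp only [smul_eq_mul]
        rw [abs_mul, abs_inv, div_eq_inv_mul]
        gcongr
        rw [dist_comm (β a), dist_comm (β a)]
        exact abs_dist_sub_le _ _ _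

theorem ACOn.mono {Z : Type*} {dst : Z → Z → ℝ} {η : ℝ → Z} {p q : ℝ} (h : ACOn dst η a b)
    (hp : a ≤ p) (hq : q ≤ b) : ACOn dst η p q := by
  obtain ⟨g, hg, h⟩ := h
  have hs := Icc_subset_Icc hp hq
  exact ⟨g, hg.mono_set hs, fun t u ht hu => h (hs ht) (hs hu)⟩

end MetricCurve

/-- The pseudometric structure on `X` given by a member of a metric family. -/
abbrev IsMetricFamily.pseudoMetricSpace {X : Type*} [TopologicalSpace X] {I : Set ℝ}
    {d : ℝ → X → X → ℝ} (hd : IsMetricFamily I d) {s : ℝ} (hs : s ∈ I) : PseudoMetricSpace X where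
  dist := d s
  dist_self := (hd s hs).1
  dist_comm := (hd s hs).2.2.1
  dist_triangle := (hd s hs).2.2.2.1

theorem tendsto_nhds_iff_of_hasBasis {Z ι : Type*} [TopologicalSpace Z] {δ : Z → ℝ} {x : Z}
    (hb : (𝓝 x).HasBasis (fun ε : ℝ => 0 < ε) fun ε => {y | δ y < ε}) (hδ : ∀ y, 0 ≤ δ y)
    {f : ι → Z} {l : Filter ι} :
    Tendsto f l (𝓝 x) ↔ Tendsto (fun i => δ (f i)) l (𝓝 0) := by
  rw [hb.tendsto_right_iff, Metric.tendsto_nhds]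
  simp [abs_of_nonneg (hδ _)]

theorem integral_abs_deriv_eq {α : ℝ → ℝ} {a b p q : ℝ} (hα : ACOn rdist α a b)
    (hdir : FutureDirected α a b ∨ PastDirected α a b) (hp : a ≤ p) (hpq : p ≤ q) (hq : q ≤ b) :
    ∫ r in p..q, |deriv α r| = |α q - α p| := by
  have hαd : ACOn dist α p q := hα.mono hp hq
  have hint := (hαd.absolutelyContinuousOnInterval hpq).integral_deriv_eq_sub
  have hnn : 0 ≤ ∫ r in p..q, |deriv α r| :=
    intervalIntegral.integral_nonneg hpq fun _ _ => abs_nonneg _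
  have hs : Ioo p q ⊆ Ioo a b := Ioo_subset_Ioo hp hq
  have hcongr : ∀ f : ℝ → ℝ, (∀ᵐ r : ℝ, r ∈ Ioo a b → |deriv α r| = f r) →
      ∫ r in p..q, |deriv α r| = ∫ r in p..q, f r := fun f hf => by
    rw [intervalIntegral.integral_of_le hpq, intervalIntegral.integral_of_le hpq,
      integral_Ioc_eq_integral_Ioo, integral_Ioc_eq_integral_Ioo]
    refine setIntegral_congr_ae measurableSet_Ioo ?_
    filter_upwards [hf] with r hr hm using hr (hs hm)
  rcases hdir with hdir | hdir
  · have h₁ := hcongr (deriv α) (hdir.mono fun r hr hm => abs_of_pos (hr hm))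
    rw [hint] at h₁
    rw [h₁] at hnn ⊢
    exact (abs_of_nonneg hnn).symm
  · have h₁ := hcongr (fun r => -deriv α r) (hdir.mono fun r hr hm => abs_of_neg (hr hm))
    rw [intervalIntegral.integral_neg, hint] at h₁
    rw [h₁] at hnn ⊢
    exact (abs_of_nonpos (neg_nonneg.1 hnn)).symm

section MetricFamily

variable {X : Type*} [TopologicalSpace X] {I : Set ℝ} {d : ℝ → X → X → ℝ} {β : ℝ → X} {p q : ℝ}

theorem IsMetricFamily.nonneg (hd : IsMetricFamily I d) {s : ℝ} (hs : s ∈ I) (x y : X) :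
    0 ≤ d s x y :=
  @dist_nonneg X (hd.pseudoMetricSpace hs) x y

theorem IsMetricFamily.mSpeed_nonneg (hd : IsMetricFamily I d) {s : ℝ} (hs : s ∈ I) (t : ℝ) :
    0 ≤ mSpeed (d s) β t :=
  @_root_.mSpeed_nonneg X (hd.pseudoMetricSpace hs) β t

theorem IsMetricFamily.integrableOn_mSpeed (hd : IsMetricFamily I d) {s : ℝ} (hs : s ∈ I)
    (hβ : ACOn (d s) β p q) (hpq : p ≤ q) : IntegrableOn (mSpeed (d s) β) (Ioo p q) :=
  @ACOn.integrableOn_mSpeed X (hd.pseudoMetricSpace hs) β p q hβ hpq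

theorem IsMetricFamily.genSpeed_nonneg (hd : IsMetricFamily I d) {s : ℝ} (hs : s ∈ I) (t : ℝ) :
    0 ≤ genSpeed d β s t :=
  limsup_nonneg_of_eventually_nonneg <| Eventually.of_forall fun _ =>
    average_nonneg (fun _ => hd.mSpeed_nonneg hs _) _ _

theorem IsMetricFamily.ae_mSpeed_le_const_mul (hd : IsMetricFamily I d) {s s' : ℝ} (hs : s ∈ I)
    (hs' : s' ∈ I) (hβ : ACOn (d s') β p q) (hpq : p ≤ q) {c : ℝ} (hc : 0 < c)
    (h : ∀ x ∈ Icc p q, ∀ y ∈ Icc p q, d s (β x) (β y) ≤ c * d s' (β x) (β y)) :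
    ∀ᵐ t : ℝ, t ∈ Ioo p q → mSpeed (d s) β t ≤ c * mSpeed (d s') β t := by
  obtain ⟨g, -, hb⟩ := @ACOn.exists_speed_bound X (hd.pseudoMetricSpace hs') β p q hβ hpq
  filter_upwards [hb] with t ht htm
  refine limsup_le_const_mul_limsup hc
    (Eventually.of_forall fun e => div_nonneg (hd.nonneg hs _ _) (abs_nonneg e)) ?_ (ht htm).1
  filter_upwards [eventually_add_mem_Ioo htm] with e he
  rw [← mul_div_assoc]
  gcongr
  exact h _ (Ioo_subset_Icc_self he) _ (Ioo_subset_Icc_self htm)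

theorem IsMetricFamily.average_mSpeed_le (hd : IsMetricFamily I d) {s s' : ℝ} (hs : s ∈ I)
    (hs' : s' ∈ I) (hβ : ∀ s ∈ I, ACOn (d s) β p q) (hpq : p ≤ q) {c : ℝ} (hc : 0 < c)
    (h : ∀ x ∈ Icc p q, ∀ y ∈ Icc p q, d s (β x) (β y) ≤ c * d s' (β x) (β y)) {t : ℝ}
    (ht : t ∈ Ioo p q) :
    ∀ᶠ e in 𝓝[≠] (0 : ℝ), (∫ u in t..(t + e), mSpeed (d s) β u) / e ≤
      c * ((∫ u in t..(t + e), mSpeed (d s') β u) / e) := by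
  filter_upwards [eventually_add_mem_Ioo ht] with e he
  have := average_mono (hd.integrableOn_mSpeed hs (hβ s hs) hpq)
    ((hd.integrableOn_mSpeed hs' (hβ s' hs') hpq).const_mul c)
    (hd.ae_mSpeed_le_const_mul hs hs' (hβ s' hs') hpq hc h) ht he
  rwa [intervalIntegral.integral_const_mul, mul_div_assoc] at this

/-- A causal curve whose metrics stay `c`-comparable to `d s` is Lipschitz with respect to its
time component. -/
theorem CausalCurve.dist_le (hd : IsMetricFamily I d) {h : ℝ → X → ℝ} {α : ℝ → ℝ} {a b : ℝ}
    (hγ : CausalCurve I d h α β a b) (hp : a ≤ p) (hpq : p ≤ q) (hq : q ≤ b) {s c H : ℝ}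
    (hs : s ∈ I) (hc : 0 < c)
    (hcmp : ∀ t ∈ Icc p q, ∀ x ∈ Icc p q, ∀ y ∈ Icc p q,
      d s (β x) (β y) ≤ c * d (α t) (β x) (β y) ∧ d (α t) (β x) (β y) ≤ c * d s (β x) (β y))
    (hH : ∀ t ∈ Icc p q, 0 ≤ h (α t) (β t) ∧ h (α t) (β t) ≤ H) :
    d s (β p) (β q) ≤ c * H * |α q - α p| := by
  obtain ⟨⟨-, hα, hβ, hαI⟩, hdir, hineq⟩ := hγ
  have hβ' : ∀ s ∈ I, ACOn (d s) β p q := fun s hs => (hβ s hs).mono hp hq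
  have hα' : ACOn dist α p q := hα.mono hp hq
  have hint := hd.integrableOn_mSpeed hs (hβ' s hs) hpq
  have hspeed : ∀ᵐ t : ℝ, t ∈ Ioo p q → mSpeed (d s) β t ≤ c * H * |deriv α t| := by
    filter_upwards [ae_tendsto_average hint, hineq] with t hlim hcaus htm
    have htI : α t ∈ I := hαI t ⟨hp.trans htm.1.le, htm.2.le.trans hq⟩
    have htm' := Ioo_subset_Icc_self htm
    have hnn : ∀ s ∈ I, ∀ᶠ e in 𝓝[≠] (0 : ℝ), 0 ≤ (∫ u in t..(t + e), mSpeed (d s) β u) / e :=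
      fun s hs => Eventually.of_forall fun _ => average_nonneg (fun _ => hd.mSpeed_nonneg hs _) _ _
    have hle := hd.average_mSpeed_le hs htI hβ' hpq hc (fun x hx y hy => (hcmp t htm' x hx y hy).1)
      htm
    have hge := hd.average_mSpeed_le htI hs hβ' hpq hc (fun x hx y hy => (hcmp t htm' x hx y hy).2)
      htm
    have hgen : genSpeed d β (α t) t ≤ h (α t) (β t) * |deriv α t| := by
      refine (le_abs_self _).trans (abs_le_of_sq_le_sq ?_
        (mul_nonneg (hH t htm').1 (abs_nonneg _)))
      rw [mul_pow, sq_abs]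
      exact hcaus ⟨hp.trans_lt htm.1, htm.2.trans_le hq⟩
    calc mSpeed (d s) β t
        = limsup (fun e : ℝ => (∫ u in t..(t + e), mSpeed (d s) β u) / e) (𝓝[≠] 0) :=
          (hlim htm).limsup_eq.symm
      _ ≤ c * genSpeed d β (α t) t := by
          refine limsup_le_const_mul_limsup hc (hnn s hs) hle
            ⟨c * (mSpeed (d s) β t + 1), ?_⟩
          filter_upwards [hge, (hlim htm).eventually_le_const (lt_add_one _)] with e h₁ h₂
          exact h₁.trans (by gcongr)
      _ ≤ c * (H * |deriv α t|) := by
          gcongr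
          exact hgen.trans (by gcongr; exact (hH t htm').2)
      _ = c * H * |deriv α t| := by ring
  have hder : IntegrableOn (deriv α) (Ioo p q) :=
    (intervalIntegrable_iff_integrableOn_Ioo_of_le hpq).1
      (hα'.absolutelyContinuousOnInterval hpq).intervalIntegrable_deriv
  calc d s (β p) (β q) ≤ ∫ r in p..q, mSpeed (d s) β r :=
        @ACOn.dist_le_integral_mSpeed X (hd.pseudoMetricSpace hs) β p q (hβ' s hs) hpq
    _ ≤ ∫ r in p..q, c * H * |deriv α r| := by
        rw [intervalIntegral.integral_of_le hpq, intervalIntegral.integral_of_le hpq,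
          integral_Ioc_eq_integral_Ioo, integral_Ioc_eq_integral_Ioo]
        refine integral_mono_ae hint (hder.abs.const_mul _) ?_
        filter_upwards [ae_restrict_of_ae hspeed, ae_restrict_mem measurableSet_Ioo] with t ht htm
        exact ht htm
    _ = c * H * |α q - α p| := by
        rw [intervalIntegral.integral_const_mul, integral_abs_deriv_eq hα hdir hp hpq hq]

theorem IsMetricFamily.genSpeed_le (hd : IsMetricFamily I d) {s C : ℝ} (hs : s ∈ I)
    (hβ : ACOn (d s) β p q) {α : ℝ → ℝ} (hα : ACOn rdist α p q) (hpq : p ≤ q) (hC : 0 < C)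
    (hle : ∀ t ∈ Icc p q, ∀ u ∈ Icc p q, d s (β t) (β u) ≤ C * |α t - α u|) {t : ℝ}
    (ht : t ∈ Ioo p q)
    (hlim : Tendsto (fun e : ℝ => (∫ u in t..(t + e), |deriv α u|) / e) (𝓝[≠] 0)
      (𝓝 |deriv α t|)) :
    genSpeed d β s t ≤ C * |deriv α t| := by
  have hac : AbsolutelyContinuousOnInterval α p q :=
    ACOn.absolutelyContinuousOnInterval (β := α) hα hpq
  have hder : IntegrableOn (deriv α) (Ioo p q) :=
    (intervalIntegrable_iff_integrableOn_Ioo_of_le hpq).1 hac.intervalIntegrable_deriv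
  have hspeed : ∀ᵐ r : ℝ, r ∈ Ioo p q → mSpeed (d s) β r ≤ C * |deriv α r| := by
    filter_upwards [hac.ae_differentiableAt] with r hr hrm
    have hslope := (hr (uIcc_of_le hpq ▸ Ioo_subset_Icc_self hrm)).hasDerivAt
    rw [hasDerivAt_iff_tendsto_slope_zero] at hslope
    rw [← hslope.abs.limsup_eq]
    refine limsup_le_const_mul_limsup hC
      (Eventually.of_forall fun e => div_nonneg (hd.nonneg hs _ _) (abs_nonneg e)) ?_
      ⟨_, hslope.abs.eventually_le_const (lt_add_one _)⟩
    filter_upwards [eventually_add_mem_Ioo hrm] with e he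
    rw [smul_eq_mul, abs_mul, abs_inv, inv_mul_eq_div, ← mul_div_assoc]
    gcongr
    exact hle _ (Ioo_subset_Icc_self he) _ (Ioo_subset_Icc_self hrm)
  rw [← hlim.limsup_eq]
  refine limsup_le_const_mul_limsup hC (Eventually.of_forall fun _ =>
    average_nonneg (fun _ => hd.mSpeed_nonneg hs _) _ _) ?_
    ⟨_, hlim.eventually_le_const (lt_add_one _)⟩
  filter_upwards [eventually_add_mem_Ioo ht] with e he
  rw [← mul_div_assoc, ← intervalIntegral.integral_const_mul]
  exact average_mono (hd.integrableOn_mSpeed hs hβ hpq) (hder.abs.const_mul _) hspeed ht he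

theorem IsMetricFamily.tendsto_nhds_iff (hd : IsMetricFamily I d) {s : ℝ} (hs : s ∈ I) {ι : Type*}
    {f : ι → X} {l : Filter ι} {x : X} :
    Tendsto f l (𝓝 x) ↔ Tendsto (fun i => d s x (f i)) l (𝓝 0) :=
  tendsto_nhds_iff_of_hasBasis ((hd s hs).2.2.2.2 x) (hd.nonneg hs x)

theorem IsMetricFamily.continuousAt (hd : IsMetricFamily I d) {s : ℝ} (hs : s ∈ I)
    (hβ : ACOn (d s) β p q) {t : ℝ} (ht : t ∈ Ioo p q) : ContinuousAt β t := by
  refine (hd.tendsto_nhds_iff hs).2 ((@ACOn.tendsto_dist X (hd.pseudoMetricSpace hs) β p q hβ t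
    ht).congr fun u => (hd s hs).2.2.1 _ _)

end MetricFamily

/-- Near a point of `I × X`, condition (C) makes all the metrics comparable with constant close
to one. -/
theorem CondC.eventually_le {X : Type*} [TopologicalSpace X] [LocallyCompactSpace X] {I : Set ℝ}
    (hI : IsOpen I) {d : ℝ → X → X → ℝ} (hd : IsMetricFamily I d) (hdC : CondC I d) {s : ℝ}
    (hs : s ∈ I) (x₀ : X) {c : ℝ} (hc : 1 < c) :
    ∃ U ∈ 𝓝 s, ∃ V ∈ 𝓝 x₀, ∀ s' ∈ U, ∀ x ∈ V, ∀ y ∈ V,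
      d s x y ≤ c * d s' x y ∧ d s' x y ≤ c * d s x y := by
  obtain ⟨δ, hδ, hδI⟩ := Metric.nhds_basis_closedBall.mem_iff.1 (hI.mem_nhds hs)
  obtain ⟨K, hK, hKx⟩ := exists_compact_mem_nhds x₀
  obtain ⟨r, hr, ω, hω0, -, hωc, hω⟩ := hdC _ K hδI (isCompact_closedBall s δ) hK
  have hsδ : s ∈ Metric.closedBall s δ := Metric.mem_closedBall_self hδ.le
  have hU : ∀ᶠ s' in 𝓝 s, ω |s - s'| < Real.log c := by
    have h0 : Tendsto (fun s' => |s - s'|) (𝓝 s) (𝓝 0) :=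
      (by fun_prop : Continuous fun s' => |s - s'|).tendsto' _ _ (by simp)
    exact (hωc.tendsto.comp h0).eventually_lt_const (by rw [hω0]; exact Real.log_pos hc)
  refine ⟨_, inter_mem hU (Metric.closedBall_mem_nhds s hδ), _,
    inter_mem hKx (((hd s hs).2.2.2.2 x₀).mem_of_mem (half_pos hr)), ?_⟩
  rintro s' ⟨hωs, hs'δ⟩ x ⟨hxK, hxr⟩ y ⟨hyK, hyr⟩
  obtain ⟨hself, hpos, hsymm, htri, -⟩ := hd s hs
  obtain ⟨hself', hpos', -⟩ := hd s' (hδI hs'δ)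
  rcases eq_or_ne x y with rfl | hxy
  · simp [hself, hself']
  have hdr : d s x y < r := by
    have h₁ := htri x x₀ y
    rw [hsymm x x₀] at h₁
    simp only [mem_ofPred_eq] at hxr hyr
    linarith
  have hinf : sInf ((fun u => d u x y) '' Metric.closedBall s δ) < r := by
    refine (csInf_le ⟨0, ?_⟩ (mem_image_of_mem _ hsδ)).trans_lt hdr
    rintro _ ⟨u, hu, rfl⟩
    exact hd.nonneg (hδI hu) x y
  have hlog := abs_le.1 ((hω s hsδ s' hs'δ x hxK y hyK hxy hinf).trans hωs.le)
  have hp := hpos x y hxy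
  have hp' := hpos' x y hxy
  have hc0 : 0 < c := one_pos.trans hc
  rw [Real.log_div hp.ne' hp'.ne'] at hlog
  constructor
  · rw [← Real.log_le_log_iff hp (by positivity), Real.log_mul hc0.ne' hp'.ne']
    linarith [hlog.2]
  · rw [← Real.log_le_log_iff hp' (by positivity), Real.log_mul hc0.ne' hp.ne']
    linarith [hlog.1]

theorem IsCompatibleProdMetric.nonneg {X : Type*} [TopologicalSpace X]
    {D : (ℝ × X) → (ℝ × X) → ℝ} (hD : IsCompatibleProdMetric D) (z w : ℝ × X) : 0 ≤ D z w := by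
  rcases eq_or_ne z w with rfl | hzw
  · exact (hD.1 z).ge
  · exact (hD.2.1 z w hzw).le

theorem IsCompatibleProdMetric.tendsto_nhds_iff {X ι : Type*} [TopologicalSpace X]
    {D : (ℝ × X) → (ℝ × X) → ℝ} (hD : IsCompatibleProdMetric D) {f : ι → ℝ × X} {l : Filter ι}
    {z : ℝ × X} : Tendsto f l (𝓝 z) ↔ Tendsto (fun i => D z (f i)) l (𝓝 0) :=
  tendsto_nhds_iff_of_hasBasis (hD.2.2.2.2 z) (hD.nonneg z)

/-- Uniform convergence localizes: near a time at which the limit is continuous, all late curves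
stay in any given neighbourhood of the limit point. -/
theorem IsCompatibleProdMetric.eventually_mem {X : Type*} [TopologicalSpace X]
    {D : (ℝ × X) → (ℝ × X) → ℝ} (hD : IsCompatibleProdMetric D) {S : Set ℝ}
    {γ : ℕ → ℝ → ℝ × X} {γ₀ : ℝ → ℝ × X}
    (hunif : ∀ ε > (0 : ℝ), ∀ᶠ j in atTop, ∀ t ∈ S, D (γ j t) (γ₀ t) < ε) {t₀ : ℝ}
    (hγ₀ : ContinuousAt γ₀ t₀) {W : Set (ℝ × X)} (hW : W ∈ 𝓝 (γ₀ t₀)) :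
    ∃ N ∈ 𝓝 t₀, ∀ᶠ j in atTop, ∀ t ∈ N ∩ S, γ j t ∈ W := by
  obtain ⟨ρ, hρ, hρW⟩ := (hD.2.2.2.2 (γ₀ t₀)).mem_iff.1 hW
  refine ⟨_, (hD.tendsto_nhds_iff.1 hγ₀).eventually_lt_const (half_pos hρ), ?_⟩
  filter_upwards [hunif _ (half_pos hρ)] with j hj t ht
  refine hρW ?_
  have h₁ := hj t ht.2
  have h₂ := hD.2.2.2.1 (γ₀ t₀) (γ₀ t) (γ j t)
  rw [hD.2.2.1 (γ₀ t) (γ j t)] at h₂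
  have h₃ : D (γ₀ t₀) (γ₀ t) < ρ / 2 := ht.1
  simp only [mem_ofPred_eq]
  linarith

/-- **Stability of causality** (Proposition 4.5): a uniform limit of causal curves
whose time component has a.e. positive (or a.e. negative) derivative is causal. -/
theorem causal_stable_under_uniform_convergence {X : Type*} [TopologicalSpace X]
    [LocallyCompactSpace X]
    (I : Set ℝ) (hIopen : IsOpen I) (hIord : I.OrdConnected) (hIne : I.Nonempty)
    (d : ℝ → X → X → ℝ) (hd : IsMetricFamily I d) (hdC : CondC I d)
    (h : ℝ → X → ℝ) (hpos : ∀ s ∈ I, ∀ x : X, 0 < h s x)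
    (hcont : ContinuousOn (fun z : ℝ × X => h z.1 z.2) (I ×ˢ (Set.univ : Set X)))
    (D : (ℝ × X) → (ℝ × X) → ℝ) (hD : IsCompatibleProdMetric D)
    (a b : ℝ) (hab : a < b)
    (α : ℕ → ℝ → ℝ) (β : ℕ → ℝ → X) (α₀ : ℝ → ℝ) (β₀ : ℝ → X)
    (hcausal : ∀ j, CausalCurve I d h (α j) (β j) a b)
    (hAC₀ : CurveIn I d α₀ β₀ a b)
    (hdir : FutureDirected α₀ a b ∨ PastDirected α₀ a b)
    (hunif : ∀ ε > (0 : ℝ), ∀ᶠ j in Filter.atTop,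
      ∀ t ∈ Set.Icc a b, D (α j t, β j t) (α₀ t, β₀ t) < ε) :
    CausalIneq d h α₀ β₀ a b := by
  obtain ⟨-, hα₀, hβ₀, hα₀I⟩ := hAC₀
  have hα₀d : ACOn dist α₀ a b := hα₀
  have hder : IntegrableOn (deriv α₀) (Ioo a b) :=
    (intervalIntegrable_iff_integrableOn_Ioo_of_le hab.le).1
      (hα₀d.absolutelyContinuousOnInterval hab.le).intervalIntegrable_deriv
  filter_upwards [ae_tendsto_average hder.abs] with t₀ hlim ht₀
  have hs : α₀ t₀ ∈ I := hα₀I t₀ (Ioo_subset_Icc_self ht₀)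
  have hlimj : ∀ t ∈ Icc a b, Tendsto (fun j => (α j t, β j t)) atTop (𝓝 (α₀ t, β₀ t)) := by
    refine fun t ht => hD.tendsto_nhds_iff.2 (Metric.tendsto_nhds.2 fun ε hε => ?_)
    filter_upwards [hunif ε hε] with j hj
    rw [Real.dist_eq, sub_zero, abs_of_nonneg (hD.nonneg _ _), hD.2.2.1]
    exact hj t ht
  have hγc : ContinuousAt (fun t => (α₀ t, β₀ t)) t₀ :=
    ((hα₀d.continuousOn hab.le).continuousAt (Icc_mem_nhds ht₀.1 ht₀.2)).prodMk
      (hd.continuousAt hs (hβ₀ _ hs) ht₀)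
  have hbound : ∀ ε > (0 : ℝ), genSpeed d β₀ (α₀ t₀) t₀ ≤
      (1 + ε) * (h (α₀ t₀) (β₀ t₀) + ε) * |deriv α₀ t₀| := by
    intro ε hε
    have hh : 0 < h (α₀ t₀) (β₀ t₀) := hpos _ hs _
    obtain ⟨U, hU, V, hV, hUV⟩ :=
      hdC.eventually_le hIopen hd hs (β₀ t₀) (lt_add_of_pos_right 1 hε)
    have hhε : ∀ᶠ z in 𝓝 (α₀ t₀, β₀ t₀), h z.1 z.2 < h (α₀ t₀) (β₀ t₀) + ε :=
      (hcont.continuousAt (prod_mem_nhds (hIopen.mem_nhds hs) univ_mem)).eventually_lt_const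
        (lt_add_of_pos_right _ hε)
    obtain ⟨N, hN, hNj⟩ := hD.eventually_mem (γ := fun j t => (α j t, β j t)) hunif hγc
      (inter_mem (prod_mem_nhds hU hV) hhε)
    obtain ⟨η, hη, hηN⟩ := Metric.nhds_basis_closedBall.mem_iff.1
      (inter_mem hN (Icc_mem_nhds ht₀.1 ht₀.2))
    rw [Real.closedBall_eq_Icc] at hηN
    have hp : a ≤ t₀ - η := (hηN (left_mem_Icc.2 (by linarith))).2.1
    have hq : t₀ + η ≤ b := (hηN (right_mem_Icc.2 (by linarith))).2.2
    have hC : 0 < (1 + ε) * (h (α₀ t₀) (β₀ t₀) + ε) := by positivity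
    have hlip : ∀ t ∈ Icc (t₀ - η) (t₀ + η), ∀ u ∈ Icc (t₀ - η) (t₀ + η), t ≤ u →
        d (α₀ t₀) (β₀ t) (β₀ u) ≤
          (1 + ε) * (h (α₀ t₀) (β₀ t₀) + ε) * |α₀ u - α₀ t| := by
      intro t ht u hu htu
      have htab := (hηN ht).2
      have huab := (hηN hu).2
      have hj : ∀ᶠ j in atTop, d (α₀ t₀) (β₀ t) (β₀ u) ≤
          d (α₀ t₀) (β₀ t) (β j t) +
            (1 + ε) * (h (α₀ t₀) (β₀ t₀) + ε) * |α j u - α j t| +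
            d (α₀ t₀) (β₀ u) (β j u) := by
        filter_upwards [hNj] with j hj
        have hmem : ∀ r ∈ Icc t u, (α j r, β j r) ∈
            U ×ˢ V ∩ {z | h z.1 z.2 < h (α₀ t₀) (β₀ t₀) + ε} := fun r hr =>
          hj r (hηN ⟨ht.1.trans hr.1, hr.2.trans hu.2⟩)
        have hαI : ∀ r ∈ Icc t u, α j r ∈ I := fun r hr =>
          (hcausal j).1.2.2.2 r ⟨htab.1.trans hr.1, hr.2.trans huab.2⟩
        have hdist := (hcausal j).dist_le hd htab.1 htu huab.2 hs (by positivity)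
          (fun r hr x hx y hy => hUV _ (hmem r hr).1.1 _ (hmem x hx).1.2 _ (hmem y hy).1.2)
          (fun r hr => ⟨(hpos _ (hαI r hr) _).le, (hmem r hr).2.le⟩)
        obtain ⟨-, -, hsymm, htri, -⟩ := hd _ hs
        have h₁ := htri (β₀ t) (β j t) (β₀ u)
        have h₂ := htri (β j t) (β j u) (β₀ u)
        rw [hsymm (β j u) (β₀ u)] at h₂
        linarith
      have hβj : ∀ r ∈ Icc a b,
          Tendsto (fun j => d (α₀ t₀) (β₀ r) (β j r)) atTop (𝓝 0) := fun r hr =>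
        (hd.tendsto_nhds_iff hs).1 (hlimj r hr).snd_nhds
      have hαj := ((hlimj u huab).fst_nhds.sub (hlimj t htab).fst_nhds).abs
      refine ge_of_tendsto (((hβj t htab).add (hαj.const_mul _)).add (hβj u huab)) hj |>.trans ?_
      simp
    refine hd.genSpeed_le hs ((hβ₀ _ hs).mono hp hq) (hα₀.mono hp hq) (by linarith) hC ?_
      ⟨by linarith, by linarith⟩ (hlim ht₀)
    intro t ht u hu
    rcases le_total t u with htu | htu
    · rw [abs_sub_comm]
      exact hlip t ht u hu htu
    · rw [(hd _ hs).2.2.1]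
      exact hlip u hu t ht htu
  have hle : genSpeed d β₀ (α₀ t₀) t₀ ≤ h (α₀ t₀) (β₀ t₀) * |deriv α₀ t₀| := by
    have hε : Tendsto (fun ε : ℝ => (1 + ε) * (h (α₀ t₀) (β₀ t₀) + ε) * |deriv α₀ t₀|) (𝓝[>] 0)
        (𝓝 (h (α₀ t₀) (β₀ t₀) * |deriv α₀ t₀|)) :=
      ((by fun_prop : Continuous fun ε : ℝ =>
        (1 + ε) * (h (α₀ t₀) (β₀ t₀) + ε) * |deriv α₀ t₀|).tendsto' 0 _
        (by simp)).mono_left nhdsWithin_le_nhds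
    exact ge_of_tendsto hε (by filter_upwards [self_mem_nhdsWithin] with ε hε using hbound ε hε)
  rw [← sq_abs (deriv α₀ t₀), ← mul_pow]
  exact pow_le_pow_left₀ (hd.genSpeed_nonneg hs _) hle 2
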